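/- arXiv:math/0701642 — 3 statements merged into one kernel-verified Lean document; each statement's English description precedes it below -/
import Mathlib

section
/- Let k be a field of characteristic zero and let H = ⊕_{(p,q)∈ℕ×ℕ} H^{p,q} be a bigraded k-vector space with only finitely many nonzero summands, each finite dimensional. Equip H ⊗ H with the bigrading in which (H⊗H)^{p,q} = ⊕_{p1+p2=p, q1+q2=q} H^{p1,q1} ⊗ H^{p2,q2}, and let τ : H⊗H → H⊗H be the k-linear involution determined on homogeneous elements by τ(x ⊗ y) = (-1)^{(p1+q1)(p2+q2)} y ⊗ x for x ∈ H^{p1,q1}, y ∈ H^{p2,q2}. Writing e(H)(u,v) = Σ_{p,q} (dim_k H^{p,q}) u^p v^q ∈ ℤ[u,v], the generating polynomial of the τ-invariant subspace satisfies Σ_{p,q} dim_k { z ∈ (H⊗H)^{p,q} : τ(z) = z } u^p v^q = (1/2)·( e(H)(u,v)^2 + e(H)(-u^2,-v^2) ). -/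
open scoped TensorProduct DirectSum

/-- Index set for the `(p,q)`-graded piece of `H ⊗ H`: quadruples
`((p₁,q₁),(p₂,q₂))` with `p₁+p₂ = p` and `q₁+q₂ = q`. -/
abbrev TensorIdx (p q : ℕ) : Type :=
  {i : (ℕ × ℕ) × (ℕ × ℕ) // i.1.1 + i.2.1 = p ∧ i.1.2 + i.2.2 = q}

/-- The `(p,q)`-graded piece of `H ⊗ H`:
`(H⊗H)^{p,q} = ⊕_{p₁+p₂=p, q₁+q₂=q} H^{p₁,q₁} ⊗ H^{p₂,q₂}`. -/
abbrev tensorGrade (k : Type*) [Field k] (H : ℕ × ℕ → Type*) [∀ pq, AddCommGroup (H pq)]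
    [∀ pq, Module k (H pq)] (p q : ℕ) : Type _ :=
  ⨁ i : TensorIdx p q, (H i.1.1 ⊗[k] H i.1.2)

/-- The graded involution `τ` on `(H⊗H)^{p,q}`, sending `x ⊗ y ↦ (-1)^{(p₁+q₁)(p₂+q₂)} y ⊗ x`
for `x ∈ H^{p₁,q₁}`, `y ∈ H^{p₂,q₂}`. -/
noncomputable def tauMap (k : Type*) [Field k] (H : ℕ × ℕ → Type*) [∀ pq, AddCommGroup (H pq)]
    [∀ pq, Module k (H pq)] (p q : ℕ) :
    tensorGrade k H p q →ₗ[k] tensorGrade k H p q :=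
  DirectSum.toModule k (TensorIdx p q) (tensorGrade k H p q) fun i =>
    ((-1 : k) ^ ((i.1.1.1 + i.1.1.2) * (i.1.2.1 + i.1.2.2))) •
      ((DirectSum.lof k (TensorIdx p q) (fun j => H j.1.1 ⊗[k] H j.1.2)
          ⟨(i.1.2, i.1.1),
            ⟨by rw [Nat.add_comm]; exact i.2.1, by rw [Nat.add_comm]; exact i.2.2⟩⟩).comp
        (TensorProduct.comm k (H i.1.1) (H i.1.2)).toLinearMap)

namespace InvDim

/-- The finite set underlying the index type. -/
def idxSet (p q : ℕ) : Finset ((ℕ × ℕ) × (ℕ × ℕ)) :=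
  ((Finset.range (p + 1) ×ˢ Finset.range (q + 1)) ×ˢ
    (Finset.range (p + 1) ×ˢ Finset.range (q + 1))).filter
      (fun i => i.1.1 + i.2.1 = p ∧ i.1.2 + i.2.2 = q)

theorem mem_idxSet (p q : ℕ) (i : (ℕ × ℕ) × (ℕ × ℕ)) :
    i ∈ idxSet p q ↔ (i.1.1 + i.2.1 = p ∧ i.1.2 + i.2.2 = q) := by
  simp only [idxSet, Finset.mem_filter, Finset.mem_product, Finset.mem_range]
  omega

instance idxFintype (p q : ℕ) : Fintype (TensorIdx p q) :=
  Fintype.subtype (idxSet p q) (mem_idxSet p q)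

theorem trace_comm (k V : Type) [Field k] [AddCommGroup V] [Module k V]
    [FiniteDimensional k V] :
    LinearMap.trace k (V ⊗[k] V) (TensorProduct.comm k V V).toLinearMap
      = (Module.finrank k V : k) := by
  classical
  have b := Module.finBasis k V
  rw [LinearMap.trace_eq_matrix_trace k (b.tensorProduct b), Matrix.trace,
    Fintype.sum_prod_type]
  simp only [Matrix.diag_apply, LinearMap.toMatrix_apply, Module.Basis.tensorProduct_apply,
    LinearEquiv.coe_coe, TensorProduct.comm_tmul, Module.Basis.tensorProduct_repr_tmul_apply,
    Module.Basis.repr_self, Finsupp.single_apply, smul_eq_mul]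
  simp

theorem trace_directSum (k : Type) [Field k] (ι : Type) [Fintype ι] [DecidableEq ι]
    (M : ι → Type) [∀ i, AddCommGroup (M i)] [∀ i, Module k (M i)]
    [∀ i, FiniteDimensional k (M i)] (f : (⨁ i, M i) →ₗ[k] (⨁ i, M i)) :
    LinearMap.trace k _ f = ∑ i, LinearMap.trace k (M i)
      (DirectSum.component k ι M i ∘ₗ f ∘ₗ DirectSum.lof k ι M i) := by
  have h : f = ∑ i, (f ∘ₗ DirectSum.lof k ι M i) ∘ₗ DirectSum.component k ι M i := by
    apply LinearMap.ext
    intro x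
    simp only [LinearMap.sum_apply, LinearMap.comp_apply]
    rw [← map_sum]
    congr 1
    apply DirectSum.ext_component k
    intro j
    rw [map_sum, Finset.sum_eq_single j]
    · rw [DirectSum.component.lof_self]
    · intro i _ hij
      rw [DirectSum.component.of, dif_neg hij]
    · simp
  conv_lhs => rw [h]
  rw [map_sum]
  refine Finset.sum_congr rfl fun i _ => ?_
  rw [LinearMap.trace_comp_comm']

theorem two_mul_finrank_ker (k V : Type) [Field k] [CharZero k] [AddCommGroup V] [Module k V]
    [FiniteDimensional k V] (f : V →ₗ[k] V) (hf : ∀ x, f (f x) = x) :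
    2 * (Module.finrank k ↥(LinearMap.ker (f - LinearMap.id)) : k) =
      (Module.finrank k V : k) + LinearMap.trace k V f := by
  have hP : LinearMap.IsProj (LinearMap.ker (f - LinearMap.id))
      ((2⁻¹ : k) • (LinearMap.id + f)) := by
    constructor
    · intro x
      simp only [LinearMap.mem_ker, LinearMap.sub_apply, LinearMap.smul_apply,
        LinearMap.add_apply, LinearMap.id_apply, map_smul, map_add, hf]
      rw [sub_add_sub_cancel, sub_self, smul_zero]
    · intro x hx
      rw [LinearMap.mem_ker, LinearMap.sub_apply, LinearMap.id_apply, sub_eq_zero] at hx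
      rw [LinearMap.smul_apply, LinearMap.add_apply, hx, LinearMap.id_apply, ← two_smul k x,
        smul_smul, inv_mul_cancel₀ two_ne_zero, one_smul]
  have ht := hP.trace
  rw [map_smul, map_add, LinearMap.trace_id, smul_eq_mul,
    inv_mul_eq_iff_eq_mul₀ two_ne_zero] at ht
  exact ht.symm

section
variable (k : Type) [Field k] (H : ℕ × ℕ → Type) [∀ pq, AddCommGroup (H pq)]
  [∀ pq, Module k (H pq)]

/-- swap of indices -/
def swapIdx {p q : ℕ} (i : TensorIdx p q) : TensorIdx p q :=
  ⟨(i.1.2, i.1.1), ⟨by rw [Nat.add_comm]; exact i.2.1, by rw [Nat.add_comm]; exact i.2.2⟩⟩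

theorem tau_comp_lof (p q : ℕ) (i : TensorIdx p q) :
    tauMap k H p q ∘ₗ DirectSum.lof k (TensorIdx p q) (fun j => H j.1.1 ⊗[k] H j.1.2) i
    = ((-1 : k) ^ ((i.1.1.1 + i.1.1.2) * (i.1.2.1 + i.1.2.2))) •
      ((DirectSum.lof k (TensorIdx p q) (fun j => H j.1.1 ⊗[k] H j.1.2) (swapIdx i)).comp
        (TensorProduct.comm k (H i.1.1) (H i.1.2)).toLinearMap) := by
  apply LinearMap.ext
  intro x
  rw [LinearMap.comp_apply, tauMap, DirectSum.toModule_lof]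
  rfl

theorem tau_lof (p q : ℕ) (i : TensorIdx p q) (x : H i.1.1 ⊗[k] H i.1.2) :
    tauMap k H p q (DirectSum.lof k (TensorIdx p q) (fun j => H j.1.1 ⊗[k] H j.1.2) i x)
    = ((-1 : k) ^ ((i.1.1.1 + i.1.1.2) * (i.1.2.1 + i.1.2.2))) •
      (DirectSum.lof k (TensorIdx p q) (fun j => H j.1.1 ⊗[k] H j.1.2) (swapIdx i)
        (TensorProduct.comm k (H i.1.1) (H i.1.2) x)) :=
  LinearMap.congr_fun (tau_comp_lof k H p q i) x

theorem tau_tau (p q : ℕ) (x : tensorGrade k H p q) :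
    tauMap k H p q (tauMap k H p q x) = x := by
  have : tauMap k H p q ∘ₗ tauMap k H p q = LinearMap.id := by
    apply DirectSum.linearMap_ext
    intro i
    apply LinearMap.ext
    intro x
    simp only [LinearMap.comp_apply, LinearMap.id_apply]
    rw [tau_lof, map_smul]
    erw [tau_lof k H p q (swapIdx i)]
    rw [smul_smul]
    have h1 : (-1 : k) ^ ((i.1.1.1 + i.1.1.2) * (i.1.2.1 + i.1.2.2)) *
       (-1 : k) ^ (((swapIdx i).1.1.1 + (swapIdx i).1.1.2) *
         ((swapIdx i).1.2.1 + (swapIdx i).1.2.2)) = 1 := by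
      simp only [swapIdx]
      rw [mul_comm (i.1.2.1 + i.1.2.2), ← mul_pow]
      simp
    rw [h1, one_smul]
    have h2 : TensorProduct.comm k (H i.1.2) (H i.1.1)
      (TensorProduct.comm k (H i.1.1) (H i.1.2) x) = x :=
        (TensorProduct.comm k (H i.1.1) (H i.1.2)).symm_apply_apply x
    exact congrArg (DirectSum.lof k (TensorIdx p q) (fun j => H j.1.1 ⊗[k] H j.1.2) i) h2
  exact LinearMap.congr_fun this x

theorem trace_tau [∀ pq, FiniteDimensional k (H pq)] (p q : ℕ) :
    LinearMap.trace k _ (tauMap k H p q) = ∑ i : TensorIdx p q,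
      if i.1.1 = i.1.2 then (-1 : k) ^ ((i.1.1.1 + i.1.1.2) * (i.1.2.1 + i.1.2.2)) *
        (Module.finrank k (H i.1.1) : k) else 0 := by
  rw [trace_directSum]
  refine Finset.sum_congr rfl fun i _ => ?_
  rw [tau_comp_lof, LinearMap.comp_smul, map_smul, smul_eq_mul]
  split_ifs with h
  · congr 1
    obtain ⟨⟨a, b⟩, hi⟩ := i
    dsimp only at h
    subst h
    rw [← trace_comm]
    congr 1
    apply LinearMap.ext
    intro x
    exact DirectSum.component.lof_self k _ _
  · have : swapIdx i ≠ i := by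
      intro h2
      exact h (congrArg (fun j : TensorIdx p q => j.1.2) h2)
    have h0 : DirectSum.component k (TensorIdx p q) (fun j => H j.1.1 ⊗[k] H j.1.2) i ∘ₗ
        ((DirectSum.lof k (TensorIdx p q) (fun j => H j.1.1 ⊗[k] H j.1.2) (swapIdx i)).comp
        (TensorProduct.comm k (H i.1.1) (H i.1.2)).toLinearMap) = 0 := by
      apply LinearMap.ext
      intro x
      exact (DirectSum.component.of k i (swapIdx i) _).trans (dif_neg this)
    rw [h0, map_zero, mul_zero]

theorem two_mul_finrank [CharZero k] [∀ pq, FiniteDimensional k (H pq)] (p q : ℕ) :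
    2 * (Module.finrank k ↥(LinearMap.ker (tauMap k H p q - LinearMap.id)) : ℤ)
     = ∑ i ∈ idxSet p q, ((Module.finrank k (H i.1) : ℤ) * (Module.finrank k (H i.2) : ℤ) +
      if i.1 = i.2 then (-1 : ℤ) ^ ((i.1.1 + i.1.2) * (i.2.1 + i.2.2)) *
        (Module.finrank k (H i.1) : ℤ) else 0) := by
  have ht := two_mul_finrank_ker k (tensorGrade k H p q) (tauMap k H p q) (tau_tau k H p q)
  rw [trace_tau, Module.finrank_directSum] at ht
  have : ((2 * (Module.finrank k ↥(LinearMap.ker (tauMap k H p q - LinearMap.id)) : ℤ) : ℤ) : k)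
     = ((∑ i ∈ idxSet p q, ((Module.finrank k (H i.1) : ℤ) * (Module.finrank k (H i.2) : ℤ) +
      if i.1 = i.2 then (-1 : ℤ) ^ ((i.1.1 + i.1.2) * (i.2.1 + i.2.2)) *
        (Module.finrank k (H i.1) : ℤ) else 0) : ℤ) : k) := by
    rw [Finset.sum_subtype (F := idxFintype p q) (idxSet p q) (mem_idxSet p q), Finset.sum_add_distrib]
    push_cast
    rw [ht]
    simp [Module.finrank_tensorProduct]
  exact_mod_cast this
end

theorem poly_identity (d : ℕ × ℕ → ℕ) (r : ℕ → ℕ → ℕ) (n : ℕ)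
    (hd : ∀ pq : ℕ × ℕ, n ≤ pq.1 ∨ n ≤ pq.2 → d pq = 0)
    (hr : ∀ p q, 2 * (r p q : ℤ) = ∑ i ∈ idxSet p q, ((d i.1 : ℤ) * (d i.2 : ℤ) +
      if i.1 = i.2 then (-1 : ℤ) ^ ((i.1.1 + i.1.2) * (i.2.1 + i.2.2)) * (d i.1 : ℤ) else 0))
    {R : Type*} [CommRing R] (u v : R) :
    2 * ∑ p ∈ Finset.range (2 * n), ∑ q ∈ Finset.range (2 * n), (r p q : R) * u ^ p * v ^ q =
     (∑ p ∈ Finset.range n, ∑ q ∈ Finset.range n, (d (p, q) : R) * u ^ p * v ^ q) ^ 2 +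
     ∑ p ∈ Finset.range n, ∑ q ∈ Finset.range n, (d (p, q) : R) * (-(u ^ 2)) ^ p *
       (-(v ^ 2)) ^ q := by
  classical
  set B := Finset.range n ×ˢ Finset.range n with hB
  set F : (ℕ × ℕ) × (ℕ × ℕ) → ℤ := fun i => (d i.1 : ℤ) * (d i.2 : ℤ) +
      if i.1 = i.2 then (-1 : ℤ) ^ ((i.1.1 + i.1.2) * (i.2.1 + i.2.2)) * (d i.1 : ℤ) else 0 with hF
  have hF0 : ∀ i, i ∉ B ×ˢ B → F i = 0 := by
    intro i hi
    have : d i.1 = 0 ∨ d i.2 = 0 := by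
      by_contra hc
      push Not at hc
      apply hi
      have h1 := mt (hd i.1) hc.1
      have h2 := mt (hd i.2) hc.2
      simp only [hB, Finset.mem_product, Finset.mem_range]
      omega
    simp only [hF]
    split_ifs with h
    · rw [← h] at this ⊢
      have h0 : d i.1 = 0 := by tauto
      simp [h0]
    · rcases this with h0 | h0 <;> simp [h0]
  have hr' : ∀ p q, 2 * (r p q : ℤ) = ∑ i ∈ (B ×ˢ B).filter
      (fun i => (i.1.1 + i.2.1, i.1.2 + i.2.2) = (p, q)), F i := by
    intro p q
    rw [hr]
    symm
    apply Finset.sum_subset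
    · intro i hi
      rw [mem_idxSet]
      simpa using (Finset.mem_filter.1 hi).2
    · intro i hi hi2
      apply hF0
      intro hi3
      apply hi2
      rw [mem_idxSet] at hi
      simp [hi3, hi]
  have hL : 2 * ∑ p ∈ Finset.range (2 * n), ∑ q ∈ Finset.range (2 * n),
      (r p q : R) * u ^ p * v ^ q =
      ∑ i ∈ B ×ˢ B, (F i : R) * u ^ (i.1.1 + i.2.1) * v ^ (i.1.2 + i.2.2) := by
    rw [← Finset.sum_product', Finset.mul_sum,
      ← Finset.sum_fiberwise_of_maps_to (s := B ×ˢ B)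
        (t := Finset.range (2 * n) ×ˢ Finset.range (2 * n))
        (g := fun i => (i.1.1 + i.2.1, i.1.2 + i.2.2))]
    · refine Finset.sum_congr rfl fun pq _ => ?_
      obtain ⟨p, q⟩ := pq
      have h := congrArg (Int.cast : ℤ → R) (hr' p q)
      push_cast at h
      dsimp only
      rw [← mul_assoc, ← mul_assoc, h, Finset.sum_mul, Finset.sum_mul]
      refine Finset.sum_congr rfl fun i hi => ?_
      have := (Finset.mem_filter.1 hi).2
      rw [Prod.mk.injEq] at this
      rw [this.1, this.2]
    · intro i hi
      simp only [hB, Finset.mem_product, Finset.mem_range] at hi ⊢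
      omega
  have hE : ∀ f : ℕ → ℕ → R, ∑ p ∈ Finset.range n, ∑ q ∈ Finset.range n, f p q =
      ∑ x ∈ B, f x.1 x.2 := fun f => (Finset.sum_product' _ _ f).symm
  rw [hL, hE, hE, sq, Finset.sum_mul_sum, ← Finset.sum_product']
  clear_value B
  have hD : ∑ x ∈ B, (d (x.1, x.2) : R) * (-(u ^ 2)) ^ x.1 * (-(v ^ 2)) ^ x.2 =
      ∑ i ∈ B ×ˢ B, if i.1 = i.2 then (d i.1 : R) * (-(u ^ 2)) ^ i.1.1 * (-(v ^ 2)) ^ i.1.2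
        else 0 := by
    rw [Finset.sum_product]
    refine Finset.sum_congr rfl fun x hx => ?_
    simp [hx]
  rw [hD, ← Finset.sum_add_distrib]
  refine Finset.sum_congr rfl fun i _ => ?_
  obtain ⟨⟨a, b⟩, ⟨c, e⟩⟩ := i
  simp only [hF]
  split_ifs with h
  · obtain ⟨rfl, rfl⟩ := Prod.mk.inj h
    have hs : (-1 : R) ^ ((a + b) * (a + b)) = (-1) ^ a * (-1) ^ b := by
      rw [← pow_add]
      rcases Nat.even_or_odd (a + b) with h | h
      · rw [h.neg_one_pow, (h.mul_left _).neg_one_pow]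
      · rw [h.neg_one_pow, (h.mul h).neg_one_pow]
    push_cast
    rw [hs, neg_pow (u ^ 2), neg_pow (v ^ 2)]
    ring
  · push_cast
    ring

end InvDim

/-- **Lemma 2.6 of the paper (linear-algebraic content).**
Let `H = ⊕_{(p,q)} H^{p,q}` be a bigraded vector space over a field of characteristic zero,
with only finitely many nonzero summands (all of them vanish when `p ≥ n` or `q ≥ n`), each
finite dimensional.  With `τ` the graded involution on `H ⊗ H` and
`e(H)(u,v) = Σ dim H^{p,q} u^p v^q`, the generating polynomial of the `τ`-invariant
subspace satisfies
`Σ_{p,q} dim {z ∈ (H⊗H)^{p,q} : τ z = z} u^p v^q = ½ (e(H)(u,v)² + e(H)(-u²,-v²))`. -/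
theorem invariant_dim_generating_polynomial (k : Type) [Field k] [CharZero k]
    (H : ℕ × ℕ → Type) [∀ pq, AddCommGroup (H pq)] [∀ pq, Module k (H pq)]
    [∀ pq, FiniteDimensional k (H pq)]
    (n : ℕ) (hH : ∀ pq : ℕ × ℕ, n ≤ pq.1 ∨ n ≤ pq.2 → Module.finrank k (H pq) = 0) :
    ∑ p ∈ Finset.range (2 * n), ∑ q ∈ Finset.range (2 * n),
        (Module.finrank k ↥(LinearMap.ker (tauMap k H p q - LinearMap.id)) :
            MvPolynomial (Fin 2) ℚ) *
          MvPolynomial.X 0 ^ p * MvPolynomial.X 1 ^ q =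
      MvPolynomial.C (1 / 2 : ℚ) *
        ((∑ p ∈ Finset.range n, ∑ q ∈ Finset.range n,
            (Module.finrank k (H (p, q)) : MvPolynomial (Fin 2) ℚ) *
              MvPolynomial.X 0 ^ p * MvPolynomial.X 1 ^ q) ^ 2 +
          ∑ p ∈ Finset.range n, ∑ q ∈ Finset.range n,
            (Module.finrank k (H (p, q)) : MvPolynomial (Fin 2) ℚ) *
              (-(MvPolynomial.X 0 ^ 2)) ^ p * (-(MvPolynomial.X 1 ^ 2)) ^ q) := by
  have h := InvDim.poly_identity (fun pq => Module.finrank k (H pq))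
    (fun p q => Module.finrank k ↥(LinearMap.ker (tauMap k H p q - LinearMap.id))) n hH
    (InvDim.two_mul_finrank k H) (MvPolynomial.X 0 : MvPolynomial (Fin 2) ℚ) (MvPolynomial.X 1)
  rw [← h, ← mul_assoc]
  have h2 : (MvPolynomial.C (1 / 2 : ℚ) : MvPolynomial (Fin 2) ℚ) * 2 = 1 := by
    rw [← map_ofNat (MvPolynomial.C : ℚ →+* MvPolynomial (Fin 2) ℚ) 2, ← map_mul]
    norm_num
  rw [h2, one_mul]
end

section
/- Let g ≥ 2 be an integer. In ℚ(u,v), with q := uv, J := (1+u)^g(1+v)^g, S := (1+u^2v)^g(1+uv^2)^g, K := (1-u^2)^g(1-v^2)^g and e_n := (1-q^n)/(1-q), set M := ( 2·J·S − J^2·(1 + 2q^{g+1} − q^2) − K·(1-q)^2 ) / ( 2(1-q)(1-q^2) ). Then the following identity holds: J^2/((1-q)^2(1-q^2)) · [ S·(1-q^{2g}) + J·( q^{3g-1} + q^{2g+1} − q^{2g-1} − q^{g+1} ) ] = M·J·e_{2g} + J^2·(J-1)·e_{g-1}·(e_{2g} − e_g) + J^2·e_g^2·(e_g − e_{g-1})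 + (1/2)·J·( J^2·e_g^2 + K·(1-q^{2g})/(1-q^2) ) − (1/2)·J^2·( e_g^2 + (1-q^{2g})/(1-q^2) ) + J^2·(1-q^{g-1})(1-q^g)/((1-q^2)(1-q)). -/
noncomputable section

/-- The field `ℚ(u,v)` of rational functions in two indeterminates over `ℚ`. -/
abbrev Kf : Type := FractionRing (MvPolynomial (Fin 2) ℚ)

/-- The indeterminate `u` in `ℚ(u,v)`. -/
def uu : Kf := algebraMap (MvPolynomial (Fin 2) ℚ) Kf (MvPolynomial.X 0)

/-- The indeterminate `v` in `ℚ(u,v)`. -/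
def vv : Kf := algebraMap (MvPolynomial (Fin 2) ℚ) Kf (MvPolynomial.X 1)

/-- `q := uv`. -/
def qq : Kf := uu * vv

/-- `J := (1+u)^g (1+v)^g`. -/
def Jg (g : ℕ) : Kf := (1 + uu) ^ g * (1 + vv) ^ g

/-- `S := (1+u²v)^g (1+uv²)^g`. -/
def Sg (g : ℕ) : Kf := (1 + uu ^ 2 * vv) ^ g * (1 + uu * vv ^ 2) ^ g

/-- `K := (1-u²)^g (1-v²)^g`. -/
def Kg (g : ℕ) : Kf := (1 - uu ^ 2) ^ g * (1 - vv ^ 2) ^ g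

/-- `e_n := (1-qⁿ)/(1-q)`. -/
def ee (n : ℕ) : Kf := (1 - qq ^ n) / (1 - qq)

lemma core_aux {F : Type*} [Field F] (h2 : (2 : F) ≠ 0) (q J S K p : F) (h : 1 - q ≠ 0) (h' : 1 + q ≠ 0) :
    J ^ 2 / ((1 - q) ^ 2 * (1 - q ^ 2)) *
        (S * (1 - (p * q) ^ 2) +
          J * (p ^ 3 * q ^ 2 + p ^ 2 * q ^ 3 - p ^ 2 * q - p * q ^ 2)) =
      ((2 * J * S - J ^ 2 * (1 + 2 * (p * q ^ 2) - q ^ 2) -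
            K * (1 - q) ^ 2) /
          (2 * (1 - q) * (1 - q ^ 2))) * J * ((1 - (p * q) ^ 2) / (1 - q)) +
        J ^ 2 * (J - 1) * ((1 - p) / (1 - q)) *
          ((1 - (p * q) ^ 2) / (1 - q) - (1 - p * q) / (1 - q)) +
        J ^ 2 * ((1 - p * q) / (1 - q)) ^ 2 * ((1 - p * q) / (1 - q) - (1 - p) / (1 - q)) +
        (1 / 2 : F) * J *
          (J ^ 2 * ((1 - p * q) / (1 - q)) ^ 2 + K * (1 - (p * q) ^ 2) / (1 - q ^ 2)) -
        (1 / 2 : F) * J ^ 2 * (((1 - p * q) / (1 - q)) ^ 2 + (1 - (p * q) ^ 2) / (1 - q ^ 2)) +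
        J ^ 2 * (1 - p) * (1 - p * q) / ((1 - q ^ 2) * (1 - q)) := by
  have e : 1 - q ^ 2 = (1 - q) * (1 + q) := by ring
  rw [e]
  field_simp
  ring

lemma qq_ne (c : ℚ) : qq ≠ algebraMap (MvPolynomial (Fin 2) ℚ) Kf (MvPolynomial.C c) := by
  intro h
  unfold qq uu vv at h
  rw [← map_mul] at h
  have h1 := IsFractionRing.injective (MvPolynomial (Fin 2) ℚ) Kf h
  have h3 := congrArg (MvPolynomial.eval (fun i : Fin 2 => if i = 0 then (1 : ℚ) else c + 1)) h1
  simp at h3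

/-- **Algebraic core of Theorem A.**  With
`M := (2JS − J²(1 + 2q^{g+1} − q²) − K(1-q)²)/(2(1-q)(1-q²))`
(the asserted Hodge polynomial of `M^s(2,d)`, `d` even), the Hodge polynomial of the
small-parameter triple moduli space (left-hand side) equals the sum over the stratification
computed in the proof of Theorem 4.3 (right-hand side). -/
theorem theoremA_algebraic_core (g : ℕ) (hg : 2 ≤ g) :
    Jg g ^ 2 / ((1 - qq) ^ 2 * (1 - qq ^ 2)) *
        (Sg g * (1 - qq ^ (2 * g)) +
          Jg g * (qq ^ (3 * g - 1) + qq ^ (2 * g + 1) - qq ^ (2 * g - 1) - qq ^ (g + 1))) =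
      ((2 * Jg g * Sg g - Jg g ^ 2 * (1 + 2 * qq ^ (g + 1) - qq ^ 2) -
            Kg g * (1 - qq) ^ 2) /
          (2 * (1 - qq) * (1 - qq ^ 2))) * Jg g * ee (2 * g) +
        Jg g ^ 2 * (Jg g - 1) * ee (g - 1) * (ee (2 * g) - ee g) +
        Jg g ^ 2 * ee g ^ 2 * (ee g - ee (g - 1)) +
        (1 / 2 : Kf) * Jg g *
          (Jg g ^ 2 * ee g ^ 2 + Kg g * (1 - qq ^ (2 * g)) / (1 - qq ^ 2)) -
        (1 / 2 : Kf) * Jg g ^ 2 * (ee g ^ 2 + (1 - qq ^ (2 * g)) / (1 - qq ^ 2)) +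
        Jg g ^ 2 * (1 - qq ^ (g - 1)) * (1 - qq ^ g) / ((1 - qq ^ 2) * (1 - qq)) := by
  have h1 : 1 - qq ≠ 0 := by
    intro h
    apply qq_ne 1
    rw [map_one, map_one]
    exact (sub_eq_zero.mp h).symm
  have h2 : 1 + qq ≠ 0 := by
    intro h
    apply qq_ne (-1)
    rw [map_neg, map_neg, map_one, map_one]
    exact (eq_neg_of_add_eq_zero_right h)
  obtain ⟨n, rfl⟩ : ∃ n, g = n + 1 := ⟨g - 1, by omega⟩
  have a1 : 3 * (n + 1) - 1 = 3 * n + 2 := by omega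
  have a2 : 2 * (n + 1) - 1 = 2 * n + 1 := by omega
  have a3 : n + 1 - 1 = n := by omega
  have b1 : qq ^ (3 * n + 2) = (qq ^ n) ^ 3 * qq ^ 2 := by ring
  have b2 : qq ^ (2 * n + 1) = (qq ^ n) ^ 2 * qq := by ring
  have b3 : qq ^ (2 * (n + 1) + 1) = (qq ^ n) ^ 2 * qq ^ 3 := by ring
  have b4 : qq ^ (2 * (n + 1)) = (qq ^ n * qq) ^ 2 := by ring
  have b5 : qq ^ (n + 1 + 1) = qq ^ n * qq ^ 2 := by ring
  have b6 : qq ^ (n + 1) = qq ^ n * qq := by ring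
  have hc : (2 : Kf) ≠ 0 := two_ne_zero
  have key := core_aux hc qq (Jg (n + 1)) (Sg (n + 1)) (Kg (n + 1)) (qq ^ n) h1 h2
  unfold ee
  rw [a1, a2, a3, b1, b2, b3, b4, b5, b6]
  exact key

end
end

section
/- Let d1, d2 be integers with d1 + d2 odd. Then, as subsets of ℚ, { σ : ∃ dL ∈ ℤ, σ = (4·dL − d1 − d2)/2 and d1/2 < dL ≤ (3·d1 − d2)/4 } ∪ { σ : ∃ dF ∈ ℤ, σ = (d1 + d2 − 4·dF)/2 and (3·d2 − d1)/4 ≤ dF < d2/2 } = { (d1 − d2)/2 + n : n ∈ ℤ, 1 ≤ n ≤ (d1 − d2 − 1)/2 }. -/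
/-- **Corollary 8.1 of the paper (arithmetic of critical values).**
For integers `d₁, d₂` with `d₁ + d₂` odd, the set of critical values exceeding
`σ_m = (d₁-d₂)/2`, namely the numbers `(4d_L − d₁ − d₂)/2` with `d_L ∈ ℤ`,
`d₁/2 < d_L ≤ (3d₁-d₂)/4`, together with the numbers `(d₁ + d₂ − 4d_F)/2` with `d_F ∈ ℤ`,
`(3d₂-d₁)/4 ≤ d_F < d₂/2`, is exactly the arithmetic progression
`(d₁-d₂)/2 + n` for integers `1 ≤ n ≤ (d₁-d₂-1)/2`. -/
theorem critical_values_22 (d1 d2 : ℤ) (hodd : Odd (d1 + d2)) :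
    ({σ : ℚ | ∃ dL : ℤ,
        σ = (4 * (dL : ℚ) - (d1 : ℚ) - (d2 : ℚ)) / 2 ∧
        (d1 : ℚ) / 2 < (dL : ℚ) ∧ (dL : ℚ) ≤ (3 * (d1 : ℚ) - (d2 : ℚ)) / 4} ∪
      {σ : ℚ | ∃ dF : ℤ,
        σ = ((d1 : ℚ) + (d2 : ℚ) - 4 * (dF : ℚ)) / 2 ∧
        (3 * (d2 : ℚ) - (d1 : ℚ)) / 4 ≤ (dF : ℚ) ∧ (dF : ℚ) < (d2 : ℚ) / 2}) =
      {σ : ℚ | ∃ n : ℤ,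
        σ = ((d1 : ℚ) - (d2 : ℚ)) / 2 + (n : ℚ) ∧
        1 ≤ n ∧ (n : ℚ) ≤ ((d1 : ℚ) - (d2 : ℚ) - 1) / 2} := by
  obtain ⟨k, hk⟩ := hodd
  ext σ
  simp only [Set.mem_union, Set.mem_setOf_eq]
  constructor
  · rintro (⟨a, rfl, h1, h2⟩ | ⟨a, rfl, h1, h2⟩)
    · have h1' : d1 < 2 * a := by
        have : (d1 : ℚ) < 2 * a := by linarith
        exact_mod_cast this
      have h2' : 4 * a ≤ 3 * d1 - d2 := by
        have : 4 * (a : ℚ) ≤ 3 * d1 - d2 := by linarith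
        exact_mod_cast this
      refine ⟨2 * a - d1, by push_cast; ring, by omega, ?_⟩
      have h3 : 2 * (2 * a - d1) ≤ d1 - d2 - 1 := by omega
      have h4 : 2 * ((2 * a - d1 : ℤ) : ℚ) ≤ d1 - d2 - 1 := by exact_mod_cast h3
      linarith
    · have h1' : 3 * d2 - d1 ≤ 4 * a := by
        have : 3 * (d2 : ℚ) - d1 ≤ 4 * a := by linarith
        exact_mod_cast this
      have h2' : 2 * a < d2 := by
        have : 2 * (a : ℚ) < d2 := by linarith
        exact_mod_cast this
      refine ⟨d2 - 2 * a, by push_cast; ring, by omega, ?_⟩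
      have h3 : 2 * (d2 - 2 * a) ≤ d1 - d2 - 1 := by omega
      have h4 : 2 * ((d2 - 2 * a : ℤ) : ℚ) ≤ d1 - d2 - 1 := by exact_mod_cast h3
      linarith
  · rintro ⟨n, rfl, h1, h2⟩
    have h1' : (1 : ℚ) ≤ n := by exact_mod_cast h1
    have hp : (∃ a, n + d1 = 2 * a) ∨ (∃ a, d2 - n = 2 * a) := by
      rcases Int.emod_two_eq_zero_or_one (n + d1) with h | h
      · exact Or.inl ⟨(n + d1) / 2, by omega⟩
      · exact Or.inr ⟨(d2 - n) / 2, by omega⟩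
    rcases hp with ⟨a, ha⟩ | ⟨a, ha⟩
    · have hq : (n : ℚ) + d1 = 2 * a := by exact_mod_cast ha
      exact Or.inl ⟨a, by linarith, by linarith, by linarith⟩
    · have hq : (d2 : ℚ) - n = 2 * a := by exact_mod_cast ha
      exact Or.inr ⟨a, by linarith, by linarith, by linarith⟩
end
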